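/- arXiv:2302.08868 — 3 statements merged into one kernel-verified Lean document; each statement's English description precedes it below -/
import Mathlib

section
/- Let h, w be natural numbers with w ≥ 1, let q : Fin (h+1) → ℝ be a tuple of frequencies, and let φ : ℤ → ℝ^{2(h+1)} be the harmonic regressor defined by φ(j) = (cos(q₀ j), sin(q₀ j), ..., cos(q_h j), sin(q_h j)). Define the information matrix A(k) = Σ_{j=k−(w−1)}^{k} φ(j) φ(j)ᵀ. Then for all integers k, the characteristic polynomial of A(k) equals the characteristic polynomial of A(k+1); in particular the eigenvalues of A(k) are the same for every step k. -/
/-!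
Advancing time by one step rotates the `i`-th pair `(cos (q i * j), sin (q i * j))` by the angle
`q i`, so `φ (j + 1) = U *ᵥ φ j` for one orthogonal matrix `U` that does not depend on `j`. Hence
`A (k + 1) = U * A k * Uᵀ`, which is similar to `A k`.
-/

open Matrix

section InformationMatrix

variable {τ m n R : Type*}

/-- The information matrix `∑ j ∈ s, φ j * (φ j)ᵀ` of a regressor `φ`. The window `s` of time
indices is an arbitrary finite set, so that moving the window means taking its image under a
shift. -/
def informationMatrix [NonUnitalNonAssocSemiring R] (φ : τ → n → R) (s : Finset τ) :
    Matrix n n R :=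
  ∑ j ∈ s, vecMulVec (φ j) (φ j)

theorem informationMatrix_map {σ : Type*} [NonUnitalNonAssocSemiring R] (φ : τ → n → R)
    (e : σ ↪ τ) (s : Finset σ) :
    informationMatrix φ (s.map e) = informationMatrix (fun j => φ (e j)) s :=
  Finset.sum_map s e _

theorem informationMatrix_mulVec [Fintype n] [CommSemiring R] (U : Matrix m n R) (φ : τ → n → R)
    (s : Finset τ) :
    informationMatrix (fun j => U *ᵥ φ j) s = U * informationMatrix φ s * Uᵀ := by
  simp only [informationMatrix, Matrix.mul_sum, Matrix.sum_mul, mul_vecMulVec, vecMulVec_mul,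
    vecMul_transpose]

variable [Fintype n] [DecidableEq n] [CommRing R]

theorem charpoly_mul_mul_transpose_of_mem_orthogonalGroup {U : Matrix n n R}
    (hU : U ∈ orthogonalGroup n R) (M : Matrix n n R) :
    (U * M * Uᵀ).charpoly = M.charpoly := by
  rw [charpoly_mul_comm, ← Matrix.mul_assoc, (mem_orthogonalGroup_iff' n R).mp hU, Matrix.one_mul]

theorem moving_window_charpoly_invariant_general {U : Matrix n n R}
    (hU : U ∈ orthogonalGroup n R) {φ : ℤ → n → R} (hφ : ∀ j, φ (j + 1) = U *ᵥ φ j) (a b : ℤ) :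
    (informationMatrix φ (Finset.Icc a b)).charpoly =
      (informationMatrix φ (Finset.Icc (a + 1) (b + 1))).charpoly := by
  have hstep : informationMatrix φ (Finset.Icc (a + 1) (b + 1)) =
      U * informationMatrix φ (Finset.Icc a b) * Uᵀ := by
    rw [← Finset.map_add_right_Icc, informationMatrix_map, ← informationMatrix_mulVec]
    simp only [addRightEmbedding_apply, hφ]
  rw [hstep, charpoly_mul_mul_transpose_of_mem_orthogonalGroup hU]

end InformationMatrix

section BlockDiagonal

variable {ι m R : Type*} [Fintype ι] [DecidableEq ι] [Fintype m]

theorem comp_diagonal_mem_orthogonalGroup [DecidableEq m] [CommRing R] {M : ι → Matrix m m R}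
    (hM : ∀ i, M i ∈ orthogonalGroup m R) :
    comp ι ι m m R (diagonal M) ∈ orthogonalGroup (ι × m) R := by
  rw [mem_orthogonalGroup_iff, transpose_comp, diagonal_transpose, diagonal_map transpose_zero,
    ← compRingEquiv_apply, ← compRingEquiv_apply, ← map_mul, diagonal_mul_diagonal]
  simp only [(mem_orthogonalGroup_iff m R).mp (hM _), diagonal_one, map_one]

theorem comp_diagonal_mulVec [NonUnitalNonAssocSemiring R] (M : ι → Matrix m m R)
    (v : ι × m → R) (p : ι × m) :
    (comp ι ι m m R (diagonal M) *ᵥ v) p = (M p.1 *ᵥ fun a => v (p.1, a)) p.2 := by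
  simp only [mulVec, dotProduct, Fintype.sum_prod_type, comp_apply]
  rw [Fintype.sum_eq_single p.1 fun i hi => by simp [diagonal_apply_ne _ hi.symm]]
  simp only [diagonal_apply_eq]

end BlockDiagonal

section Rotation

/-- The matrix of the rotation of the plane by the angle `θ`. -/
noncomputable def planeRotation (θ : ℝ) : Matrix (Fin 2) (Fin 2) ℝ :=
  !![Real.cos θ, -Real.sin θ; Real.sin θ, Real.cos θ]

theorem planeRotation_mem_orthogonalGroup (θ : ℝ) :
    planeRotation θ ∈ orthogonalGroup (Fin 2) ℝ :=
  (mem_specialOrthogonalGroup_iff.mp <| of_mem_specialOrthogonalGroup_fin_two_iff.mpr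
    ⟨rfl, rfl, by simp⟩).1

theorem planeRotation_mulVec_cos_sin (θ α : ℝ) :
    planeRotation θ *ᵥ ![Real.cos α, Real.sin α] = ![Real.cos (α + θ), Real.sin (α + θ)] := by
  ext a
  fin_cases a <;> simp [planeRotation, mulVec, dotProduct, Real.cos_add, Real.sin_add] <;> ring

variable {ι : Type*}

/-- The regressor at time `t` with frequencies `q`: the pair of coordinates `(i, 0)`, `(i, 1)` is
the point of the unit circle at the angle `q i * t`. -/
noncomputable def harmonicRegressor (q : ι → ℝ) (t : ℝ) : ι × Fin 2 → ℝ :=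
  fun p => ![Real.cos (q p.1 * t), Real.sin (q p.1 * t)] p.2

/-- The block-diagonal matrix that rotates the `i`-th coordinate plane by the angle `θ i`. -/
noncomputable def blockRotation [DecidableEq ι] (θ : ι → ℝ) : Matrix (ι × Fin 2) (ι × Fin 2) ℝ :=
  comp ι ι (Fin 2) (Fin 2) ℝ (diagonal fun i => planeRotation (θ i))

variable [Fintype ι] [DecidableEq ι]

theorem blockRotation_mem_orthogonalGroup (θ : ι → ℝ) :
    blockRotation θ ∈ orthogonalGroup (ι × Fin 2) ℝ :=
  comp_diagonal_mem_orthogonalGroup fun i => planeRotation_mem_orthogonalGroup (θ i)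

theorem blockRotation_mulVec_harmonicRegressor (q : ι → ℝ) (s t : ℝ) :
    blockRotation (s • q) *ᵥ harmonicRegressor q t = harmonicRegressor q (t + s) := by
  ext p
  simp only [blockRotation, comp_diagonal_mulVec, harmonicRegressor, planeRotation_mulVec_cos_sin,
    Pi.smul_apply, smul_eq_mul, mul_add, mul_comm s]

theorem add_one_eq_blockRotation_mulVec_of_cos_sin {q : ι → ℝ} {φ : ℤ → ι × Fin 2 → ℝ}
    (hφ : ∀ (j : ℤ) (i : ι), φ j (i, 0) = Real.cos (q i * j) ∧ φ j (i, 1) = Real.sin (q i * j))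
    (j : ℤ) : φ (j + 1) = blockRotation q *ᵥ φ j := by
  have hreg (j : ℤ) : φ j = harmonicRegressor q j := by
    ext ⟨i, a⟩
    fin_cases a
    exacts [(hφ j i).1, (hφ j i).2]
  simpa only [hreg, one_smul, Int.cast_add, Int.cast_one] using
    (blockRotation_mulVec_harmonicRegressor q 1 j).symm

end Rotation

/-- The characteristic polynomial (hence the eigenvalues) of the moving-window
information matrix with harmonic regressor is the same at every step. -/
theorem moving_window_charpoly_invariant
    (h w : ℕ) (hw : 1 ≤ w) (q : Fin (h + 1) → ℝ)
    (φ : ℤ → (Fin (h + 1) × Fin 2) → ℝ)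
    (hφ : ∀ (j : ℤ) (i : Fin (h + 1)),
      φ j (i, 0) = Real.cos (q i * (j : ℝ)) ∧ φ j (i, 1) = Real.sin (q i * (j : ℝ)))
    (A : ℤ → Matrix (Fin (h + 1) × Fin 2) (Fin (h + 1) × Fin 2) ℝ)
    (hA : ∀ k : ℤ, A k = ∑ j ∈ Finset.Icc (k - ((w : ℤ) - 1)) k,
      Matrix.vecMulVec (φ j) (φ j)) :
    ∀ k : ℤ, (A k).charpoly = (A (k + 1)).charpoly := by
  intro k
  rw [hA, hA, add_sub_right_comm]
  exact moving_window_charpoly_invariant_general (blockRotation_mem_orthogonalGroup q)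
    (add_one_eq_blockRotation_mulVec_of_cos_sin hφ) _ _
end

section
/- Let u, v ∈ ℝⁿ with ‖u‖ = ‖v‖ and let R = u uᵀ − v vᵀ. Then every eigenvalue of R is either 0, or equals ‖R‖_F / √2, or equals −‖R‖_F / √2; that is, the rank-two update matrix R has exactly the two nonzero eigenvalues ±‖R‖_F/√2 (where ‖·‖_F is the Frobenius norm), all other eigenvalues being zero. -/
/-!
For `‖u‖ = ‖v‖` the matrix `R = u uᵀ − v vᵀ` is symmetric, traceless and of rank at most two. Listed
with multiplicity, its eigenvalues therefore sum to zero and at most two of them are nonzero: a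
nonzero eigenvalue `μ` is accompanied by `−μ` and by zeros. Since `‖R‖_F²` is the sum of the squared
eigenvalues, it equals `2 μ²`.
-/

section AlmostAllZero

open Finset

variable {ι R : Type*}

theorem sum_pow_eq_pow_sum_of_card_le_one [Semiring R] [DecidableEq R] {s : Finset ι} {f : ι → R}
    {n : ℕ} (hn : n ≠ 0) (hs : #{i ∈ s | f i ≠ 0} ≤ 1) :
    ∑ i ∈ s, f i ^ n = (∑ i ∈ s, f i) ^ n := by
  have hpow : ∑ i ∈ s with f i ≠ 0, f i ^ n = ∑ i ∈ s, f i ^ n :=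
    sum_filter_of_ne fun i _ hi hfi => hi (by rw [hfi, zero_pow hn])
  rw [← hpow, ← sum_filter_ne_zero s]
  rcases Nat.le_one_iff_eq_zero_or_eq_one.mp hs with hzero | hone
  · simp [card_eq_zero.mp hzero, hn]
  · obtain ⟨k, hk⟩ := card_eq_one.mp hone
    simp [hk]

theorem sum_sq_eq_two_mul_sq_of_sum_eq_zero [Ring R] [DecidableEq R] {s : Finset ι} {f : ι → R}
    {j : ι} (hj : j ∈ s) (hfj : f j ≠ 0) (hs : #{i ∈ s | f i ≠ 0} ≤ 2) (hsum : ∑ i ∈ s, f i = 0) :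
    ∑ i ∈ s, f i ^ 2 = 2 * f j ^ 2 := by
  classical
  have hrest : ∑ i ∈ s.erase j, f i = -f j :=
    eq_neg_of_add_eq_zero_right ((add_sum_erase s f hj).trans hsum)
  have hcard : #{i ∈ s.erase j | f i ≠ 0} ≤ 1 := by
    rw [filter_erase, card_erase_of_mem (mem_filter.mpr ⟨hj, hfj⟩)]
    lia
  rw [← add_sum_erase s _ hj, sum_pow_eq_pow_sum_of_card_le_one two_ne_zero hcard, hrest, neg_sq,
    two_mul]

end AlmostAllZero

section Matrices

open Matrix

variable {m ι : Type*} [Fintype ι]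

theorem rank_sub_le_rank_add_rank {K : Type*} [Field K] (A B : Matrix m ι K) :
    (A - B).rank ≤ A.rank + B.rank := by
  have hrange : LinearMap.range (A - B).mulVecLin ≤
      LinearMap.range A.mulVecLin ⊔ LinearMap.range B.mulVecLin := by
    rintro _ ⟨x, rfl⟩
    rw [mulVecLin_apply, sub_mulVec]
    exact Submodule.sub_mem_sup ⟨x, rfl⟩ ⟨x, rfl⟩
  exact (Submodule.finrank_mono hrange).trans (Submodule.finrank_add_le_finrank_add_finrank _ _)

theorem mem_spectrum_of_mulVec_eq_smul [DecidableEq ι] {K : Type*} [CommRing K] {A : Matrix ι ι K}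
    {μ : K} {x : ι → K} (hx : x ≠ 0) (h : A *ᵥ x = μ • x) : μ ∈ spectrum K A := by
  rw [← spectrum_toLin']
  exact (Module.End.hasEigenvalue_of_hasEigenvector
    (Module.End.hasEigenvector_iff.mpr ⟨Module.End.mem_eigenspace_iff.mpr h, hx⟩)).mem_spectrum

variable {𝕜 : Type*} [RCLike 𝕜]

theorem trace_mul_conjTranspose_eq_sum_norm_sq [Fintype m] (A : Matrix m ι 𝕜) :
    (A * Aᴴ).trace = ∑ i, ∑ j, (‖A i j‖ : 𝕜) ^ 2 := by
  simp only [trace, diag_apply, mul_apply, conjTranspose_apply, RCLike.star_def, RCLike.mul_conj]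

variable [DecidableEq ι] {A : Matrix ι ι 𝕜}

theorem trace_mul_self_eq_sum_eigenvalues_sq (hA : A.IsHermitian) :
    (A * A).trace = ∑ i, (hA.eigenvalues i : 𝕜) ^ 2 := by
  conv_lhs => rw [hA.spectral_theorem, ← map_mul, diagonal_mul_diagonal,
    Unitary.conjStarAlgAut_apply, trace_mul_cycle, Unitary.coe_star_mul_self, one_mul]
  simp [trace_diagonal, sq]

theorem sum_norm_sq_eq_sum_eigenvalues_sq (hA : A.IsHermitian) :
    ∑ i, ∑ j, ‖A i j‖ ^ 2 = ∑ i, hA.eigenvalues i ^ 2 := by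
  have htrace := trace_mul_conjTranspose_eq_sum_norm_sq A
  rw [hA.eq, trace_mul_self_eq_sum_eigenvalues_sq hA] at htrace
  exact_mod_cast htrace.symm

theorem sum_norm_sq_eq_two_mul_sq_of_mem_spectrum (hA : A.IsHermitian) (htr : A.trace = 0)
    (hrank : A.rank ≤ 2) {μ : ℝ} (hμ : μ ∈ spectrum ℝ A) (hμ0 : μ ≠ 0) :
    ∑ i, ∑ j, ‖A i j‖ ^ 2 = 2 * μ ^ 2 := by
  rw [hA.spectrum_real_eq_range_eigenvalues] at hμ
  obtain ⟨i, rfl⟩ := hμ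
  have hsum : ∑ i, hA.eigenvalues i = 0 := by
    rw [hA.trace_eq_sum_eigenvalues] at htr
    exact_mod_cast htr
  rw [hA.rank_eq_card_non_zero_eigs, Fintype.card_subtype] at hrank
  rw [sum_norm_sq_eq_sum_eigenvalues_sq hA,
    sum_sq_eq_two_mul_sq_of_sum_eq_zero (Finset.mem_univ i) hμ0 hrank hsum]

theorem rank_two_update_eigenvalues_general (hA : A.IsHermitian) (htr : A.trace = 0)
    (hrank : A.rank ≤ 2) {μ : ℝ} (hμ : μ ∈ spectrum ℝ A) :
    μ = 0 ∨ μ = √(∑ i, ∑ j, ‖A i j‖ ^ 2) / √2 ∨ μ = -(√(∑ i, ∑ j, ‖A i j‖ ^ 2) / √2) := by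
  refine or_iff_not_imp_left.mpr fun hμ0 => ?_
  rw [sum_norm_sq_eq_two_mul_sq_of_mem_spectrum hA htr hrank hμ hμ0, Real.sqrt_mul zero_le_two,
    mul_div_cancel_left₀ _ (Real.sqrt_ne_zero'.mpr two_pos), Real.sqrt_sq_eq_abs]
  exact eq_or_eq_neg_of_abs_eq rfl

end Matrices

section Update

open Matrix

variable {ι K : Type*}

theorem isSymm_vecMulVec_self [CommMagma K] (a : ι → K) : (vecMulVec a a).IsSymm :=
  transpose_vecMulVec a a

theorem rank_vecMulVec_sub_vecMulVec_le_two {m : Type*} [Fintype ι] [Field K] (a c : m → K)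
    (b d : ι → K) : (vecMulVec a b - vecMulVec c d).rank ≤ 2 :=
  (rank_sub_le_rank_add_rank _ _).trans
    (add_le_add (rank_vecMulVec_le a b) (rank_vecMulVec_le c d))

end Update

/-- If `‖u‖ = ‖v‖`, then every eigenvalue of the rank-two update `R = u uᵀ − v vᵀ`
is either `0`, or `‖R‖_F / √2`, or `−‖R‖_F / √2`, where `‖·‖_F` is the Frobenius norm. -/
theorem rank_two_update_eigenvalues
    (n : ℕ) (u v : EuclideanSpace ℝ (Fin n)) (huv : ‖u‖ = ‖v‖)
    (R : Matrix (Fin n) (Fin n) ℝ)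
    (hR : R = Matrix.vecMulVec (fun i => u i) (fun i => u i) -
      Matrix.vecMulVec (fun i => v i) (fun i => v i))
    (F : ℝ) (hF : F = Real.sqrt (∑ i : Fin n, ∑ j : Fin n, (R i j) ^ 2)) :
    ∀ μ : ℝ, (∃ x : Fin n → ℝ, x ≠ 0 ∧ R.mulVec x = μ • x) →
      μ = 0 ∨ μ = F / Real.sqrt 2 ∨ μ = -(F / Real.sqrt 2) := by
  rintro μ ⟨x, hx, hRx⟩
  have hherm : R.IsHermitian := by
    rw [hR, Matrix.isHermitian_iff_isSymm]
    exact (isSymm_vecMulVec_self _).sub (isSymm_vecMulVec_self _)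
  have htrace : R.trace = 0 := by
    rw [hR, Matrix.trace_sub, Matrix.trace_vecMulVec, Matrix.trace_vecMulVec, sub_eq_zero]
    have hsq : ‖u‖ ^ 2 = ‖v‖ ^ 2 := by rw [huv]
    simpa only [EuclideanSpace.real_norm_sq_eq, dotProduct, ← sq] using hsq
  have hrank : R.rank ≤ 2 := hR ▸ rank_vecMulVec_sub_vecMulVec_le_two _ _ _ _
  simpa only [hF, Real.norm_eq_abs, sq_abs] using
    rank_two_update_eigenvalues_general hherm htrace hrank (mem_spectrum_of_mulVec_eq_smul hx hRx)
end

section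
/- Let A be an invertible n × n real matrix, θ ∈ ℝⁿ, b ∈ ℝⁿ with A θ = b. Let u, v, d ∈ ℝⁿ, set Q = [u v] (the n × 2 matrix with columns u, v), D = diag(1, −1), Γ = A⁻¹, U = Γ Q, and S = D + Qᵀ Γ Q. Assume S is invertible and A' = A + u uᵀ − v vᵀ is invertible. Then the vector θ' = (I − U S⁻¹ Qᵀ)(θ + Γ d) satisfies A' θ' = b + d; i.e., the recursive parameter update solves the updated linear system. -/
open scoped Matrix

/-!
The update of `A` factors through the correction of the solution: if `A Γ = 1`, `C C' = 1` and
`(C' + V Γ Q) T = 1`, then `(A + Q C V) Γ Q = Q C (C' + V Γ Q)`, and multiplying by `T V` gives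
`(A + Q C V) (1 - Γ Q T V) = A`. So the updated matrix sends the corrected vector to
`A (θ + Γ d) = A θ + d`. The moving window is the case `V = Qᵀ`, `T = S⁻¹` and `C = C' = D`,
since `D = diag(1, -1)` is its own inverse.
-/

section RightInverse

open Matrix

variable {m n k l R : Type*} [Fintype m] [Fintype n] [Fintype k] [Fintype l]
  [DecidableEq m] [DecidableEq k]

theorem add_mul_mul_mul_rightInv_mul [Semiring R] {A : Matrix m n R} {Γ : Matrix n m R}
    {C : Matrix k l R} {C' : Matrix l k R} (Q : Matrix m k R) (V : Matrix l n R)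
    (hΓ : A * Γ = 1) (hC : C * C' = 1) :
    (A + Q * C * V) * (Γ * Q) = Q * C * (C' + V * Γ * Q) :=
  calc (A + Q * C * V) * (Γ * Q)
      = A * Γ * Q + Q * C * (V * Γ * Q) := by simp only [Matrix.add_mul, Matrix.mul_assoc]
    _ = Q * (C * C') + Q * C * (V * Γ * Q) := by rw [hΓ, hC, Matrix.one_mul, Matrix.mul_one]
    _ = Q * C * (C' + V * Γ * Q) := by rw [Matrix.mul_add, Matrix.mul_assoc Q C C']

variable [DecidableEq n] [DecidableEq l] [Ring R] {A : Matrix m n R} {Γ : Matrix n m R}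
  {Q : Matrix m k R} {C : Matrix k l R} {C' : Matrix l k R} {V : Matrix l n R} {T : Matrix k l R}

theorem add_mul_mul_mul_one_sub_rightInv
    (hΓ : A * Γ = 1) (hC : C * C' = 1) (hT : (C' + V * Γ * Q) * T = 1) :
    (A + Q * C * V) * (1 - Γ * Q * T * V) = A :=
  calc (A + Q * C * V) * (1 - Γ * Q * T * V)
      = A + Q * C * V - (A + Q * C * V) * (Γ * Q) * (T * V) := by
        simp only [Matrix.mul_sub, Matrix.mul_one, Matrix.mul_assoc]
    _ = A + Q * C * V - Q * C * ((C' + V * Γ * Q) * T) * V := by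
        rw [add_mul_mul_mul_rightInv_mul Q V hΓ hC]
        simp only [Matrix.mul_assoc]
    _ = A := by rw [hT, Matrix.mul_one, add_sub_cancel_right]

theorem recursive_parameter_update_general {θ : n → R} {b : m → R} (d : m → R)
    (hΓ : A * Γ = 1) (hC : C * C' = 1) (hT : (C' + V * Γ * Q) * T = 1) (hθ : A *ᵥ θ = b) :
    (A + Q * C * V) *ᵥ ((1 - Γ * Q * T * V) *ᵥ (θ + Γ *ᵥ d)) = b + d := by
  rw [mulVec_mulVec, add_mul_mul_mul_one_sub_rightInv hΓ hC hT, mulVec_add, hθ, mulVec_mulVec, hΓ,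
    one_mulVec]

end RightInverse

section Signature

open Matrix

variable {m n R : Type*} [NonAssocRing R]

theorem diag_one_neg_one_mul_self :
    (!![1, 0; 0, -1] : Matrix (Fin 2) (Fin 2) R) * !![1, 0; 0, -1] = 1 := by
  simp [one_fin_two]

theorem mul_diag_one_neg_one_mul (M : Matrix m (Fin 2) R) (N : Matrix (Fin 2) n R) :
    M * !![(1 : R), 0; 0, -1] * N =
      vecMulVec (M.col 0) (N.row 0) - vecMulVec (M.col 1) (N.row 1) := by
  ext i j
  simp [mul_apply, Fin.sum_univ_two, vecMulVec_apply, sub_eq_add_neg]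

end Signature

/-- The recursive parameter update `θ' = (I − U S⁻¹ Qᵀ)(θ + Γ d)` solves the updated
linear system `A' θ' = b + d`, where `A' = A + u uᵀ − v vᵀ`, `Γ = A⁻¹`, `U = Γ Q`,
`Q = [u v]`, `S = D + Qᵀ Γ Q`, `D = diag(1, −1)`. -/
theorem recursive_parameter_update
    (n : ℕ) (A : Matrix (Fin n) (Fin n) ℝ) (hA : IsUnit A.det)
    (θ b : Fin n → ℝ) (hθ : A.mulVec θ = b)
    (u v d : Fin n → ℝ)
    (Q : Matrix (Fin n) (Fin 2) ℝ) (hQ : ∀ i, Q i 0 = u i ∧ Q i 1 = v i)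
    (D : Matrix (Fin 2) (Fin 2) ℝ) (hD : D = !![(1 : ℝ), 0; 0, -1])
    (Γ : Matrix (Fin n) (Fin n) ℝ) (hΓ : Γ = A⁻¹)
    (U : Matrix (Fin n) (Fin 2) ℝ) (hU : U = Γ * Q)
    (S : Matrix (Fin 2) (Fin 2) ℝ) (hS : S = D + Qᵀ * Γ * Q)
    (hSinv : IsUnit S.det)
    (A' : Matrix (Fin n) (Fin n) ℝ)
    (hA' : A' = A + Matrix.vecMulVec u u - Matrix.vecMulVec v v)
    (hA'inv : IsUnit A'.det)
    (θ' : Fin n → ℝ)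
    (hθ' : θ' = ((1 : Matrix (Fin n) (Fin n) ℝ) - U * S⁻¹ * Qᵀ).mulVec (θ + Γ.mulVec d)) :
    A'.mulVec θ' = b + d := by
  obtain rfl : Q.col 0 = u := funext fun i ↦ (hQ i).1
  obtain rfl : Q.col 1 = v := funext fun i ↦ (hQ i).2
  have hQD : A' = A + Q * D * Qᵀ := by
    rw [hA', hD, mul_diag_one_neg_one_mul, add_sub_assoc, Matrix.row_transpose]
  subst hQD hθ' hU hS hΓ hD
  exact recursive_parameter_update_general d (A.mul_nonsing_inv hA) diag_one_neg_one_mul_self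
    (Matrix.mul_nonsing_inv _ hSinv) hθ
end
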